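/- (YA-sequential selection.) Let A be a binary treatment with potential outcomes Y_0, Y_1, let the observed outcome Y satisfy consistency, and let V = (V_i)_{i ∈ I} be a finite family of covariates such that V_I controls for confounding (Y_a ⊥⊥ A | V_I for a = 0, 1) and the joint law of (A, (V_i)_{i ∈ I}) is absolutely continuous with respect to P_A ⊗ ⨂_{i ∈ I} P_{V_i} with a density that is positive almost everywhere. Let C_YA = R_A(V_{R_{Y|A}(V)}), the treatment Markov boundary of the subfamily indexed by the outcome Markov boundary of V. Then Y_a ⊥⊥ A | V_{C_YA} for a = 0, 1. -/

import Mathlib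

/-!
Conditional independence `X ⊥⊥ U | W` is used in the form that `P(X ∈ s | U, W)` is a.s. a function
of `W` (`condIndepGiven_iff`). Positivity of the density makes the law of `(A, V)` equivalent to the
product of its marginals, whence the intersection property (`aesm_inter`): a variable that is a.s. a
function of `V_J` and also of `V_K` is a.s. a function of `V_{J ∩ K}`, because almost every choice of
values for the coordinates outside `K` may be frozen without affecting the identity between the two
functions. Markov boundaries over a finite index set are therefore Markov blankets
(`outBoundary_spec`, `treatBoundary_spec`).

Let `R` be the outcome boundary and `C` the treatment boundary of `V_R`. By confounding control,
`P(Y_a ∈ s | A, V)` is a function of `V`; on `{A = a}` it equals `P(Y ∈ s | A, V)` by consistency,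
which is a function of `(A, V_R)`. Positivity transports this equality off `{A = a}`, so
`P(Y_a ∈ s | A, V)` is a function of `V_R` and `Y_a ⊥⊥ A | V_R`. Hence
`P(A ∈ t | Y_a, V_R) = P(A ∈ t | V_R)`, a function of `V_C`, which gives `Y_a ⊥⊥ A | V_C`
(`control_one`).
-/

open MeasureTheory ProbabilityTheory

/-- `X ⊥⊥ Y | W` under `μ`: conditional independence of the random elements `X` and `Y`
given the σ-algebra generated by the random element `W`. -/
def CondIndepGiven {Ω α β γ : Type*} [mΩ : MeasurableSpace Ω] [StandardBorelSpace Ω]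
    [MeasurableSpace α] [MeasurableSpace β] [MeasurableSpace γ]
    (μ : Measure Ω) [IsFiniteMeasure μ]
    (X : Ω → α) (Y : Ω → β) (W : Ω → γ) : Prop :=
  ∃ hle : MeasurableSpace.comap W inferInstance ≤ mΩ,
    CondIndepFun (MeasurableSpace.comap W inferInstance) hle X Y μ

/-- The subvector `(V_i)_{i ∈ J}` of a family of random variables. -/
def subvec {Ω I : Type*} (V : I → Ω → ℝ) (J : Set I) : Ω → (J → ℝ) :=
  fun ω j => V j ω

/-- The joint law of `(V_i)_{i ∈ I}` is absolutely continuous w.r.t. the product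
`⨂_{i ∈ I} P_{V_i}` of its one-dimensional marginal laws, with a density that is positive
almost everywhere. -/
def PositiveFamilyDensity {Ω I : Type*} [MeasurableSpace Ω] [Fintype I]
    (μ : Measure Ω) (V : I → Ω → ℝ) : Prop :=
  μ.map (fun ω i => V i ω) ≪ Measure.pi (fun i => μ.map (V i)) ∧
    ∀ᵐ x ∂(Measure.pi fun i => μ.map (V i)),
      0 < (μ.map (fun ω i => V i ω)).rnDeriv (Measure.pi fun i => μ.map (V i)) x

/-- The joint law of `(W, (V_i)_{i ∈ I})` is absolutely continuous w.r.t. the product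
`P_W ⊗ ⨂_{i ∈ I} P_{V_i}` of its one-dimensional marginal laws, with a density that is
positive almost everywhere. -/
def PositivePairDensity {Ω α I : Type*} [MeasurableSpace Ω] [MeasurableSpace α] [Fintype I]
    (μ : Measure Ω) (W : Ω → α) (V : I → Ω → ℝ) : Prop :=
  μ.map (fun ω => (W ω, fun i => V i ω)) ≪ (μ.map W).prod (Measure.pi fun i => μ.map (V i)) ∧
    ∀ᵐ x ∂((μ.map W).prod (Measure.pi fun i => μ.map (V i))),
      0 < (μ.map (fun ω => (W ω, fun i => V i ω))).rnDeriv
            ((μ.map W).prod (Measure.pi fun i => μ.map (V i))) x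

/-- The joint law of `(W, U, (V_i)_{i ∈ I})` is absolutely continuous w.r.t. the product
`P_W ⊗ P_U ⊗ ⨂_{i ∈ I} P_{V_i}` of its one-dimensional marginal laws, with a density that is
positive almost everywhere. -/
def PositiveTripleDensity {Ω I : Type*} [MeasurableSpace Ω] [Fintype I]
    (μ : Measure Ω) (W U : Ω → ℝ) (V : I → Ω → ℝ) : Prop :=
  μ.map (fun ω => (W ω, U ω, fun i => V i ω)) ≪
      (μ.map W).prod ((μ.map U).prod (Measure.pi fun i => μ.map (V i))) ∧
    ∀ᵐ x ∂((μ.map W).prod ((μ.map U).prod (Measure.pi fun i => μ.map (V i)))),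
      0 < (μ.map (fun ω => (W ω, U ω, fun i => V i ω))).rnDeriv
            ((μ.map W).prod ((μ.map U).prod (Measure.pi fun i => μ.map (V i)))) x

/-- `J ∈ 𝔯_A(V)`: `J` is a treatment Markov blanket of the family `V`,
i.e. `A ⊥⊥ V_{I∖J} | V_J`. -/
def IsTreatBlanket {Ω I : Type*} [MeasurableSpace Ω] [StandardBorelSpace Ω]
    (μ : Measure Ω) [IsFiniteMeasure μ] (A : Ω → ℝ) (V : I → Ω → ℝ) (J : Set I) : Prop :=
  CondIndepGiven μ A (subvec V (Set.univ \ J)) (subvec V J)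

/-- `J ∈ 𝔯_{Y|A}(V)`: `J` is an outcome Markov blanket of the family `V`,
i.e. `Y ⊥⊥ V_{I∖J} | (A, V_J)`. -/
def IsOutBlanket {Ω I : Type*} [MeasurableSpace Ω] [StandardBorelSpace Ω]
    (μ : Measure Ω) [IsFiniteMeasure μ] (A Y : Ω → ℝ) (V : I → Ω → ℝ) (J : Set I) : Prop :=
  CondIndepGiven μ Y (subvec V (Set.univ \ J)) (fun ω => (A ω, subvec V J ω))

/-- `R_A(V_J)`: the treatment Markov boundary of the subfamily `(V_i)_{i ∈ J}`, i.e. the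
intersection of all `J' ⊆ J` such that `A ⊥⊥ V_{J∖J'} | V_{J'}`. -/
def treatBoundary {Ω I : Type*} [MeasurableSpace Ω] [StandardBorelSpace Ω]
    (μ : Measure Ω) [IsFiniteMeasure μ] (A : Ω → ℝ) (V : I → Ω → ℝ) (J : Set I) : Set I :=
  ⋂₀ {J' : Set I | J' ⊆ J ∧ CondIndepGiven μ A (subvec V (J \ J')) (subvec V J')}

/-- `R_{Y|A}(V_J)`: the outcome Markov boundary of the subfamily `(V_i)_{i ∈ J}`, i.e. the
intersection of all `J' ⊆ J` such that `Y ⊥⊥ V_{J∖J'} | (A, V_{J'})`. -/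
def outBoundary {Ω I : Type*} [MeasurableSpace Ω] [StandardBorelSpace Ω]
    (μ : Measure Ω) [IsFiniteMeasure μ] (A Y : Ω → ℝ) (V : I → Ω → ℝ) (J : Set I) : Set I :=
  ⋂₀ {J' : Set I | J' ⊆ J ∧
        CondIndepGiven μ Y (subvec V (J \ J')) (fun ω => (A ω, subvec V J' ω))}

/-- `A` is a binary treatment taking values in `{0, 1}`. -/
def IsBinary {Ω : Type*} (A : Ω → ℝ) : Prop :=
  ∀ ω, A ω = 0 ∨ A ω = 1

/-- Consistency of the observed outcome `Y` with the potential outcomes `Y₀, Y₁`: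
`Y = Y₁` a.s. on `{A = 1}` and `Y = Y₀` a.s. on `{A = 0}`. -/
def Consistency {Ω : Type*} [MeasurableSpace Ω] (μ : Measure Ω) (A Y Y0 Y1 : Ω → ℝ) : Prop :=
  (∀ᵐ ω ∂μ, A ω = 1 → Y ω = Y1 ω) ∧ (∀ᵐ ω ∂μ, A ω = 0 → Y ω = Y0 ω)

/-- The random vector `C` controls for confounding: `Y_a ⊥⊥ A | C` for `a = 0, 1`. -/
def ControlsConfounding {Ω γ : Type*} [MeasurableSpace Ω] [StandardBorelSpace Ω]
    [MeasurableSpace γ] (μ : Measure Ω) [IsFiniteMeasure μ]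
    (A Y0 Y1 : Ω → ℝ) (C : Ω → γ) : Prop :=
  CondIndepGiven μ Y0 A C ∧ CondIndepGiven μ Y1 A C

open Set Filter

/-- The σ-algebra `σ(X)` on `Ω` generated by the random element `X`. -/
abbrev gen {Ω α : Type*} [MeasurableSpace α] (X : Ω → α) : MeasurableSpace Ω :=
  MeasurableSpace.comap X inferInstance

/-! ### Conditional independence through conditional probabilities -/

section CondExp

variable {Ω : Type*} [mΩ : MeasurableSpace Ω] {μ : Measure Ω} [IsFiniteMeasure μ]

/-- If `E[f | m₂]` is a.s. `m`-measurable, then conditioning on any σ-algebra between `m` and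
`m₂` gives the same result. -/
lemma condExp_eq_of_aesm {m m₁ m₂ : MeasurableSpace Ω} (h01 : m ≤ m₁) (h12 : m₁ ≤ m₂)
    (h2 : m₂ ≤ mΩ) {f : Ω → ℝ} (hf : AEStronglyMeasurable[m] (μ[f | m₂]) μ) :
    μ[f | m₁] =ᵐ[μ] μ[f | m₂] :=
  (condExp_condExp_of_le h12 h2).symm.trans
    (condExp_of_aestronglyMeasurable' (h12.trans h2) (hf.mono h01) integrable_condExp)

lemma integrable_ind {s : Set Ω} (hs : MeasurableSet s) :
    Integrable (s.indicator fun _ => (1 : ℝ)) μ :=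
  (integrable_const (1 : ℝ)).indicator hs

/-- `X ⊥⊥ U | W` iff the conditional probabilities of the events `{X ∈ s}` given `(U, W)` are
a.s. functions of `W` alone. All conditional independences below are handled in this form. -/
lemma condIndepGiven_iff [StandardBorelSpace Ω] {α β γ : Type*}
    [MeasurableSpace α] [StandardBorelSpace α] [Nonempty α]
    [MeasurableSpace β] [StandardBorelSpace β] [Nonempty β] [MeasurableSpace γ]
    {X : Ω → α} {U : Ω → β} {W : Ω → γ}
    (hX : Measurable X) (hU : Measurable U) (hW : Measurable W) :
    CondIndepGiven μ X U W ↔ ∀ s, MeasurableSet s →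
      AEStronglyMeasurable[gen W]
        (μ⟦X ⁻¹' s | gen U ⊔ gen W⟧) μ := by
  have hle : gen W ≤ mΩ := hW.comap_le
  constructor
  · rintro ⟨_, h⟩ s hs
    have h' := (condIndepFun_iff_condDistrib_prod_ae_eq_prodMkRight hX hU hW).1 h.symm
    have h1 := condDistrib_ae_eq_condExp (μ := μ) (hW.prodMk hU) hX hs
    have h2 := condDistrib_ae_eq_condExp (μ := μ) hW hX hs
    have h3 := ae_of_ae_map (hW.prodMk hU).aemeasurable h'
    rw [show MeasurableSpace.comap (fun ω => (W ω, U ω)) inferInstance =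
      gen U ⊔ gen W by
        rw [sup_comm]; exact MeasurableSpace.comap_prodMk _ _] at h1
    refine AEStronglyMeasurable.congr
      (stronglyMeasurable_condExp (μ := μ) (f := (X ⁻¹' s).indicator fun _ => (1 : ℝ))).aestronglyMeasurable ?_
    filter_upwards [h1, h2, h3] with ω h1 h2 h3
    rw [← h1, ← h2, h3]
    rfl
  · intro h
    refine ⟨hle, ?_⟩
    rw [condIndepFun_iff_condExp_inter_preimage_eq_mul hX hU]
    intro s t hs ht
    have hle2 : gen U ⊔ gen W ≤ mΩ := sup_le hU.comap_le hle
    have key : μ⟦X ⁻¹' s | gen W⟧ =ᵐ[μ] μ⟦X ⁻¹' s | gen U ⊔ gen W⟧ :=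
      condExp_eq_of_aesm le_rfl le_sup_right hle2 (h s hs)
    have hUt : MeasurableSet[(gen U ⊔ gen W)] (U ⁻¹' t) :=
      (le_sup_left : gen U ≤ (gen U ⊔ gen W)) _ ⟨t, ht, rfl⟩
    have e1 : ((X ⁻¹' s ∩ U ⁻¹' t).indicator fun _ => (1 : ℝ)) =
        (U ⁻¹' t).indicator ((X ⁻¹' s).indicator fun _ => (1 : ℝ)) := by
      rw [indicator_indicator, inter_comm]
    have e2 := condExp_indicator (integrable_ind (μ := μ) (hX hs)) hUt
    have e3 : (U ⁻¹' t).indicator (μ⟦X ⁻¹' s | gen U ⊔ gen W⟧) =ᵐ[μ]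
        μ⟦X ⁻¹' s | gen W⟧ * (U ⁻¹' t).indicator fun _ => (1 : ℝ) := by
      filter_upwards [key] with ω hω
      by_cases hu : ω ∈ U ⁻¹' t <;> simp [hu, hω]
    have hint : Integrable (μ⟦X ⁻¹' s | gen W⟧ * (U ⁻¹' t).indicator fun _ => (1 : ℝ)) μ :=
      ((integrable_condExp (m := (gen U ⊔ gen W))).indicator (hU ht)).congr e3
    rw [e1]
    exact (condExp_condExp_of_le le_sup_right hle2).symm.trans
      ((condExp_congr_ae (e2.trans e3)).trans
        (condExp_mul_of_aestronglyMeasurable_left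
          stronglyMeasurable_condExp.aestronglyMeasurable hint (integrable_ind (hU ht))))

end CondExp

/-! ### Freezing coordinates under a product measure -/

section Product

variable {I : Type*} [Fintype I]

open Classical in
/-- Taking the coordinates in `J` from one sample and the others from an independent copy again
gives a sample of the product measure. -/
lemma map_piecewise_pi (ν : I → Measure ℝ) [∀ i, IsProbabilityMeasure (ν i)] (J : Set I) :
    MeasurePreserving (fun p : (I → ℝ) × (I → ℝ) => J.piecewise p.1 p.2)
      ((Measure.pi ν).prod (Measure.pi ν)) (Measure.pi ν) := by
  have hm : Measurable (fun p : (I → ℝ) × (I → ℝ) => J.piecewise p.1 p.2) := by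
    refine measurable_pi_lambda _ fun i => ?_
    by_cases hi : i ∈ J <;> simp only [Set.piecewise, hi, if_true, if_false] <;> fun_prop
  refine ⟨hm, (Measure.pi_eq fun s hs => ?_).symm⟩
  rw [Measure.map_apply hm (MeasurableSet.univ_pi hs)]
  have : (fun p : (I → ℝ) × (I → ℝ) => J.piecewise p.1 p.2) ⁻¹' (univ.pi s) =
      (univ.pi fun i => if i ∈ J then s i else univ) ×ˢ
        (univ.pi fun i => if i ∈ J then univ else s i) := by
    ext p
    simp only [mem_preimage, mem_univ_pi, mem_prod, ← forall_and]
    refine forall_congr' fun i => ?_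
    by_cases hi : i ∈ J <;> simp [hi]
  rw [this, Measure.prod_prod, Measure.pi_pi, Measure.pi_pi, ← Finset.prod_mul_distrib]
  refine Finset.prod_congr rfl fun i _ => ?_
  by_cases hi : i ∈ J <;> simp [hi]

open Classical in
/-- An a.e. identity under a product measure survives freezing the coordinates outside `J` at
suitable values `c` (Fubini). -/
lemma exists_ae_eq_freeze {α : Type*} [MeasurableSpace α] (ρ : Measure α) [IsProbabilityMeasure ρ]
    (ν : I → Measure ℝ) [∀ i, IsProbabilityMeasure (ν i)] (J : Set I)
    {G₁ G₂ : α × (I → ℝ) → ℝ} (h : G₁ =ᵐ[ρ.prod (Measure.pi ν)] G₂) :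
    ∃ c : I → ℝ, (fun x => G₁ (x.1, J.piecewise x.2 c)) =ᵐ[ρ.prod (Measure.pi ν)]
      fun x => G₂ (x.1, J.piecewise x.2 c) := by
  have hmp := (MeasurePreserving.id ρ).prod (map_piecewise_pi ν J)
  have h1 := (hmp.comp (measurePreserving_prodAssoc ρ (Measure.pi ν) (Measure.pi ν)))
  have h2 := h1.comp (Measure.measurePreserving_swap (μ := Measure.pi ν)
    (ν := ρ.prod (Measure.pi ν)))
  have h3 := Measure.ae_ae_of_ae_prod (h2.quasiMeasurePreserving.ae h)
  exact h3.exists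

end Product

/-! ### Markov boundaries are Markov blankets -/

section Family

variable {Ω I : Type*}

/-- The σ-algebra `σ(V_J)` generated by the subvector indexed by `J`. -/
abbrev sig (V : I → Ω → ℝ) (J : Set I) : MeasurableSpace Ω :=
  gen (subvec V J)

lemma sig_eq (V : I → Ω → ℝ) (J : Set I) :
    sig V J = ⨆ i ∈ J, MeasurableSpace.comap (V i) inferInstance := by
  rw [iSup_subtype']
  change MeasurableSpace.comap (subvec V J) MeasurableSpace.pi = _
  simp only [MeasurableSpace.pi, MeasurableSpace.comap_iSup, MeasurableSpace.comap_comp]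
  rfl

lemma sig_mono (V : I → Ω → ℝ) {J K : Set I} (h : J ⊆ K) : sig V J ≤ sig V K := by
  rw [sig_eq, sig_eq]
  exact biSup_mono h

lemma sig_diff_sup (V : I → Ω → ℝ) {J K : Set I} (h : J ⊆ K) :
    sig V (K \ J) ⊔ sig V J = sig V K := by
  simp only [sig_eq]
  rw [← iSup_union, sdiff_union_of_subset h]

lemma measurable_sig (V : I → Ω → ℝ) {J : Set I} {i : I} (hi : i ∈ J) :
    Measurable[sig V J] (V i) := by
  have : Measurable[sig V J] (subvec V J) := comap_measurable _
  exact (measurable_pi_apply (⟨i, hi⟩ : J)).comp this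

variable [mΩ : MeasurableSpace Ω]

lemma measurable_subvec {V : I → Ω → ℝ} (hV : ∀ i, Measurable (V i)) (J : Set I) :
    Measurable (subvec V J) :=
  measurable_pi_lambda _ fun j => hV j

lemma sig_le {V : I → Ω → ℝ} (hV : ∀ i, Measurable (V i)) (J : Set I) : sig V J ≤ mΩ :=
  (measurable_subvec hV J).comap_le

variable {μ : Measure Ω} [IsProbabilityMeasure μ] [Fintype I]

/-- The joint law of `(Z, (V_i)_{i ∈ I})` and the product `P_Z ⊗ ⨂_{i ∈ I} P_{V_i}` have the same
null sets. -/
def EquivProd {α : Type*} [MeasurableSpace α] (μ : Measure Ω) (Z : Ω → α) (V : I → Ω → ℝ) : Prop :=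
  μ.map (fun ω => (Z ω, fun i => V i ω)) ≪ (μ.map Z).prod (Measure.pi fun i => μ.map (V i)) ∧
  (μ.map Z).prod (Measure.pi fun i => μ.map (V i)) ≪ μ.map (fun ω => (Z ω, fun i => V i ω))

lemma EquivProd.of_pos {α : Type*} [MeasurableSpace α] {Z : Ω → α} {V : I → Ω → ℝ}
    (hZ : Measurable Z) (hV : ∀ i, Measurable (V i))
    (h : PositivePairDensity μ Z V) : EquivProd μ Z V := by
  have := Measure.isProbabilityMeasure_map (μ := μ) hZ.aemeasurable
  have := fun i => Measure.isProbabilityMeasure_map (μ := μ) (hV i).aemeasurable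
  have := Measure.isProbabilityMeasure_map (μ := μ)
    (hZ.prodMk (measurable_pi_lambda (fun ω i => V i ω) hV)).aemeasurable
  refine ⟨h.1, ?_⟩
  have h2 := withDensity_absolutelyContinuous' (Measure.measurable_rnDeriv _ _).aemeasurable
    (h.2.mono fun _ hx => hx.ne')
  rwa [Measure.withDensity_rnDeriv_eq _ _ h.1] at h2

/-- Marginalizing `Z` out: the constant `()` in its place lets statements about `(Z, V)` specialize
to statements about `V` alone. -/
lemma EquivProd.unit {α : Type*} [MeasurableSpace α] {Z : Ω → α} {V : I → Ω → ℝ}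
    (hZ : Measurable Z) (hV : ∀ i, Measurable (V i))
    (h : EquivProd μ Z V) : EquivProd μ (fun _ => ()) V := by
  have := Measure.isProbabilityMeasure_map (μ := μ) hZ.aemeasurable
  have := fun i => Measure.isProbabilityMeasure_map (μ := μ) (hV i).aemeasurable
  have hVm : Measurable (fun ω i => V i ω) := measurable_pi_lambda _ hV
  have hT : Measurable (fun x : α × (I → ℝ) => ((), x.2)) := by fun_prop
  have e1 : (μ.map (fun ω => (Z ω, fun i => V i ω))).map (fun x : α × (I → ℝ) => ((), x.2)) =
      μ.map (fun ω => ((), fun i => V i ω)) := by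
    rw [Measure.map_map hT (hZ.prodMk hVm)]; rfl
  have e2 : ((μ.map Z).prod (Measure.pi fun i => μ.map (V i))).map
      (fun x : α × (I → ℝ) => ((), x.2)) =
      (μ.map (fun _ => ())).prod (Measure.pi fun i => μ.map (V i)) := by
    have := Measure.map_prod_map (μ.map Z) (Measure.pi fun i => μ.map (V i))
      (measurable_const (a := ())) measurable_id
    rw [Measure.map_id, Measure.map_map measurable_const hZ] at this
    exact this.symm
  have a := h.1.map hT
  have b := h.2.map hT
  rw [e1, e2] at a b
  exact ⟨a, b⟩

/-- Intersection property: if the law of `(Z, V)` is equivalent to the product of its marginals,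
a variable that is a.s. a function of `(Z, V_J)` and also of `(Z, V_K)` is a.s. a function of
`(Z, V_{J ∩ K})`. In an identity `g₁(Z, V_J) = g₂(Z, V_K)`, freezing the coordinates outside `K`
leaves `g₂` unchanged and makes `g₁` a function of `(Z, V_{J ∩ K})`. -/
lemma aesm_inter {α : Type*} [MeasurableSpace α] {Z : Ω → α} {V : I → Ω → ℝ}
    (hZ : Measurable Z) (hV : ∀ i, Measurable (V i)) (h : EquivProd μ Z V) {J K : Set I}
    {f : Ω → ℝ} (hJ : AEStronglyMeasurable[gen Z ⊔ sig V J] f μ)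
    (hK : AEStronglyMeasurable[gen Z ⊔ sig V K] f μ) :
    AEStronglyMeasurable[gen Z ⊔ sig V (J ∩ K)] f μ := by
  classical
  have := Measure.isProbabilityMeasure_map (μ := μ) hZ.aemeasurable
  have := fun i => Measure.isProbabilityMeasure_map (μ := μ) (hV i).aemeasurable
  have hVm : Measurable (fun ω i => V i ω) := measurable_pi_lambda _ hV
  have factor : ∀ L : Set I, AEStronglyMeasurable[gen Z ⊔ sig V L] f μ →
      ∃ g : α × (L → ℝ) → ℝ, Measurable g ∧ f =ᵐ[μ] fun ω => g (Z ω, subvec V L ω) := by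
    rintro L ⟨f', hf', hff'⟩
    rw [sig, ← MeasurableSpace.comap_prodMk] at hf'
    obtain ⟨g, hg, rfl⟩ := hf'.exists_eq_measurable_comp
    exact ⟨g, hg.measurable, hff'⟩
  obtain ⟨g₁, hg₁, hf₁⟩ := factor J hJ
  obtain ⟨g₂, hg₂, hf₂⟩ := factor K hK
  let G₁ : α × (I → ℝ) → ℝ := fun x => g₁ (x.1, fun j => x.2 j)
  let G₂ : α × (I → ℝ) → ℝ := fun x => g₂ (x.1, fun j => x.2 j)
  have hG₁ : Measurable G₁ := hg₁.comp (by fun_prop)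
  have hG₂ : Measurable G₂ := hg₂.comp (by fun_prop)
  have hG : G₁ =ᵐ[μ.map (fun ω => (Z ω, fun i => V i ω))] G₂ := by
    refine (ae_map_iff (hZ.prodMk hVm).aemeasurable (measurableSet_eq_fun hG₁ hG₂)).2 ?_
    exact hf₁.symm.trans hf₂
  obtain ⟨c, hc⟩ := exists_ae_eq_freeze (μ.map Z) (fun i => μ.map (V i)) K (h.2.ae_le hG)
  have hc' := ae_of_ae_map (hZ.prodMk hVm).aemeasurable (h.1.ae_le hc)
  refine ⟨fun ω => g₁ (Z ω, fun j : J => K.piecewise (fun i => V i ω) c j), ?_, ?_⟩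
  · refine Measurable.stronglyMeasurable (hg₁.comp
      (Measurable.prodMk ?_ (@measurable_pi_lambda _ _ _ (_) _ _ fun j => ?_)))
    · exact (comap_measurable Z).mono le_sup_left le_rfl
    · by_cases hj : (j : I) ∈ K
      · simp only [Set.piecewise, hj, if_true]
        exact (measurable_sig V (J := J ∩ K) ⟨j.2, hj⟩).mono le_sup_right le_rfl
      · simp only [Set.piecewise, hj, if_false]
        exact measurable_const
  · filter_upwards [hf₂, hc'] with ω h1 h2
    refine h1.trans (Eq.trans ?_ h2.symm)
    simp only [G₂]
    congr 2
    ext j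
    simp [subvec]

/-- The blankets inside `J`, i.e. the `K ⊆ J` for which every `f ∈ F` is a.s. a function of
`(Z, V_K)`, are closed under intersection; being finitely many, their total intersection (the
boundary) is again a blanket. -/
lemma blanket_sInter {α : Type*} [MeasurableSpace α] {Z : Ω → α} {V : I → Ω → ℝ}
    (hZ : Measurable Z) (hV : ∀ i, Measurable (V i)) (h : EquivProd μ Z V) {J : Set I}
    (F : Set (Ω → ℝ)) (hF : ∀ f ∈ F, AEStronglyMeasurable[gen Z ⊔ sig V J] f μ)
    {S : Set (Set I)}
    (hS : S = {K | K ⊆ J ∧ ∀ f ∈ F, AEStronglyMeasurable[gen Z ⊔ sig V K] f μ}) :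
    ⋂₀ S ∈ S := by
  have hJ : J ∈ S := by rw [hS]; exact ⟨subset_rfl, hF⟩
  have key : ∀ T : Set (Set I), T.Finite → T ⊆ S → J ∩ ⋂₀ T ∈ S := by
    intro T hT
    induction T, hT using Set.Finite.induction_on with
    | empty => intro _; simpa using hJ
    | @insert K T _ _ ih =>
      intro hsub
      have hK := hsub (mem_insert _ _)
      have hT := ih ((subset_insert _ _).trans hsub)
      rw [sInter_insert, inter_left_comm]
      rw [hS] at hK hT ⊢
      exact ⟨inter_subset_left.trans hK.1,
        fun f hf => aesm_inter hZ hV h (hK.2 f hf) (hT.2 f hf)⟩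
  have := key S (Set.toFinite S) subset_rfl
  rwa [inter_eq_self_of_subset_right (sInter_subset_of_mem hJ)] at this

variable [StandardBorelSpace Ω]

/-- The outcome Markov boundary `R` satisfies `Y ⊥⊥ V_{I∖R} | (A, V_R)`, stated through
conditional probabilities. -/
lemma outBoundary_spec {A Y : Ω → ℝ} {V : I → Ω → ℝ} (hA : Measurable A) (hY : Measurable Y)
    (hV : ∀ i, Measurable (V i)) (h : EquivProd μ A V) {s : Set ℝ} (hs : MeasurableSet s) :
    AEStronglyMeasurable[gen A ⊔ sig V (outBoundary μ A Y V univ)]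
      (μ⟦Y ⁻¹' s | gen A ⊔ sig V univ⟧) μ := by
  let F : Set (Ω → ℝ) := {f | ∃ s, MeasurableSet s ∧
    f = μ⟦Y ⁻¹' s | gen A ⊔ sig V univ⟧}
  have hgen : ∀ K : Set I, gen (fun ω => (A ω, subvec V K ω)) =
      gen A ⊔ sig V K := fun K => MeasurableSpace.comap_prodMk _ _
  have := blanket_sInter (J := univ) hA hV h F
    (by rintro _ ⟨s, -, rfl⟩; exact stronglyMeasurable_condExp.aestronglyMeasurable)
    (S := {J' | J' ⊆ univ ∧
        CondIndepGiven μ Y (subvec V (univ \ J')) (fun ω => (A ω, subvec V J' ω))}) (by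
      ext K
      refine and_congr_right fun hK => ?_
      rw [condIndepGiven_iff hY (measurable_subvec hV _) (hA.prodMk (measurable_subvec hV _))]
      rw [hgen, sup_left_comm, sig_diff_sup V hK]
      exact ⟨fun h => by rintro _ ⟨s, hs, rfl⟩; exact h s hs, fun h s hs => h _ ⟨s, hs, rfl⟩⟩)
  obtain ⟨h1, h2⟩ := this
  rw [condIndepGiven_iff hY (measurable_subvec hV _) (hA.prodMk (measurable_subvec hV _)), hgen,
    sup_left_comm, sig_diff_sup V h1] at h2
  exact h2 s hs

/-- The treatment Markov boundary `C` of `V_R` satisfies `A ⊥⊥ V_{R∖C} | V_C`, stated through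
conditional probabilities. -/
lemma treatBoundary_spec {A : Ω → ℝ} {V : I → Ω → ℝ} (hA : Measurable A)
    (hV : ∀ i, Measurable (V i)) (h : EquivProd μ A V) (R : Set I) :
    treatBoundary μ A V R ⊆ R ∧ ∀ s, MeasurableSet s →
      AEStronglyMeasurable[sig V (treatBoundary μ A V R)] (μ⟦A ⁻¹' s | sig V R⟧) μ := by
  let F : Set (Ω → ℝ) := {f | ∃ s, MeasurableSet s ∧ f = μ⟦A ⁻¹' s | sig V R⟧}
  have hbot : ∀ m : MeasurableSpace Ω,
      MeasurableSpace.comap (fun _ : Ω => ()) inferInstance ⊔ m = m := by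
    intro m
    rw [MeasurableSpace.comap_const, bot_sup_eq]
  have := blanket_sInter (J := R) (measurable_const (a := ())) hV (h.unit hA hV) F
    (by
      rintro _ ⟨s, -, rfl⟩
      rw [hbot]
      exact stronglyMeasurable_condExp.aestronglyMeasurable)
    (S := {J' | J' ⊆ R ∧ CondIndepGiven μ A (subvec V (R \ J')) (subvec V J')}) (by
      ext K
      refine and_congr_right fun hK => ?_
      rw [condIndepGiven_iff hA (measurable_subvec hV _) (measurable_subvec hV _),
        hbot, sig_diff_sup V hK]
      exact ⟨fun h => by rintro _ ⟨s, hs, rfl⟩; exact h s hs, fun h s hs => h _ ⟨s, hs, rfl⟩⟩)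
  obtain ⟨h1, h2⟩ := this
  rw [condIndepGiven_iff hA (measurable_subvec hV _) (measurable_subvec hV _),
    sig_diff_sup V h1] at h2
  exact ⟨h1, h2⟩

/-- The result for a single potential outcome `Ya`, the one observed when `A = a`; `b` is the other
treatment level. -/
lemma control_one {A Y Ya : Ω → ℝ} {V : I → Ω → ℝ} (hA : Measurable A) (hY : Measurable Y)
    (hYa : Measurable Ya) (hV : ∀ i, Measurable (V i)) (hE : EquivProd μ A V)
    (a b : ℝ) (hbin : ∀ ω, A ω = a ∨ A ω = b) (hcons : ∀ᵐ ω ∂μ, A ω = a → Y ω = Ya ω)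
    (hS : CondIndepGiven μ Ya A (subvec V univ)) :
    CondIndepGiven μ Ya A (subvec V (treatBoundary μ A V (outBoundary μ A Y V univ))) := by
  set R := outBoundary μ A Y V univ with hR
  obtain ⟨hCR, hC⟩ := treatBoundary_spec hA hV hE R
  set C := treatBoundary μ A V R with hCdef
  have hsub := measurable_subvec hV
  suffices hsymm : CondIndepGiven μ A Ya (subvec V C) from ⟨hsymm.1, hsymm.2.symm⟩
  rw [condIndepGiven_iff hA hYa (hsub C)]
  intro t ht
  have hmAle : gen A ≤ mΩ := hA.comap_le
  have hmYle : gen Ya ≤ mΩ := hYa.comap_le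
  -- If `A ≠ a` a.s., then `A` is a.s. constant and independent of everything.
  by_cases hPa : μ (A ⁻¹' {a}) = 0
  · have hAb : ((A ⁻¹' t).indicator fun _ => (1 : ℝ)) =ᵐ[μ]
        fun _ => t.indicator (fun _ => (1 : ℝ)) b := by
      have : ∀ᵐ ω ∂μ, A ω ≠ a := measure_eq_zero_iff_ae_notMem.1 hPa
      filter_upwards [this] with ω hω
      have := (hbin ω).resolve_left hω
      exact congrArg (t.indicator fun _ => (1 : ℝ)) this
    refine AEStronglyMeasurable.congr ?_ (condExp_congr_ae hAb).symm
    rw [condExp_const (sup_le hmYle (sig_le hV C))]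
    exact stronglyMeasurable_const.aestronglyMeasurable
  -- `P(Ya ∈ s | A, V) = P(Ya ∈ s | V)` agrees on `{A = a}` with `P(Y ∈ s | A, V)`, a function
  -- `g (a, V_R)` there; since `P(A = a) > 0`, positivity extends this equality to all of `Ω`.
  have hred : ∀ s, MeasurableSet s →
      AEStronglyMeasurable[sig V R] (μ⟦Ya ⁻¹' s | gen A ⊔ sig V univ⟧) μ := by
    intro s hs
    obtain ⟨p', hp', hhp⟩ := (condIndepGiven_iff hYa hA (hsub univ)).1 hS s hs
    obtain ⟨p, hp, rfl⟩ := hp'.exists_eq_measurable_comp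
    obtain ⟨g', hg', hkg⟩ := outBoundary_spec hA hY hV hE hs
    rw [sig, ← MeasurableSpace.comap_prodMk] at hg'
    obtain ⟨g, hg, rfl⟩ := hg'.exists_eq_measurable_comp
    have hpm := hp.measurable
    have hgm := hg.measurable
    have hAa : MeasurableSet[gen A ⊔ sig V univ] (A ⁻¹' {a}) :=
      (le_sup_left : gen A ≤ _) _ ⟨{a}, measurableSet_singleton a, rfl⟩
    have hk := condExp_indicator (integrable_ind (μ := μ) (hY hs)) hAa
    have hh := condExp_indicator (integrable_ind (μ := μ) (hYa hs)) hAa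
    have hkh : (A ⁻¹' {a}).indicator ((Y ⁻¹' s).indicator fun _ => (1 : ℝ)) =ᵐ[μ]
        (A ⁻¹' {a}).indicator ((Ya ⁻¹' s).indicator fun _ => (1 : ℝ)) := by
      filter_upwards [hcons] with ω hω
      by_cases ha : A ω = a
      · have ha' : ω ∈ A ⁻¹' {a} := ha
        rw [indicator_of_mem ha', indicator_of_mem ha']
        exact congrArg (s.indicator fun _ => (1 : ℝ)) (hω ha)
      · simp [indicator, ha]
    have hon : ∀ᵐ ω ∂μ, A ω = a → p (subvec V univ ω) = g (a, subvec V R ω) := by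
      filter_upwards [hk, hh, condExp_congr_ae (m := gen A ⊔ sig V univ) hkh, hhp, hkg]
        with ω h1 h2 h3 h4 h5 ha
      have : (A ⁻¹' {a}).indicator (μ⟦Ya ⁻¹' s | gen A ⊔ sig V univ⟧) ω =
          (A ⁻¹' {a}).indicator (μ⟦Y ⁻¹' s | gen A ⊔ sig V univ⟧) ω := by
        rw [← h1, ← h2, h3]
      rw [indicator_of_mem (by exact ha), indicator_of_mem (by exact ha)] at this
      rw [← ha]
      exact h4.symm.trans (this.trans h5)
    let N : Set (I → ℝ) := {v | p (fun j => v j) ≠ g (a, fun j => v j)}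
    have hN : MeasurableSet N := by
      refine (measurableSet_eq_fun (f := fun v : I → ℝ => p (fun j => v j))
        (g := fun v : I → ℝ => g (a, fun j => v j)) ?_ ?_).compl
      · exact hpm.comp (by fun_prop)
      · exact hgm.comp (by fun_prop)
    have hVm : Measurable (fun ω i => V i ω) := measurable_pi_lambda _ hV
    have := Measure.isProbabilityMeasure_map (μ := μ) hA.aemeasurable
    have := fun i => Measure.isProbabilityMeasure_map (μ := μ) (hV i).aemeasurable
    have h0 : μ.map (fun ω => (A ω, fun i => V i ω)) ({a} ×ˢ N) = 0 := by
      rw [Measure.map_apply (hA.prodMk hVm) ((measurableSet_singleton a).prod hN),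
        measure_eq_zero_iff_ae_notMem]
      filter_upwards [hon] with ω hω hmem
      exact hmem.2 (hω hmem.1)
    have h1 := hE.2 h0
    rw [Measure.prod_prod, Measure.map_apply hA (measurableSet_singleton a)] at h1
    have h2 := (mul_eq_zero.1 h1).resolve_left hPa
    have h3 : μ.map (fun ω => (A ω, fun i => V i ω)) (univ ×ˢ N) = 0 :=
      hE.1 (by rw [Measure.prod_prod, h2, mul_zero])
    rw [Measure.map_apply (hA.prodMk hVm) (MeasurableSet.univ.prod hN),
        measure_eq_zero_iff_ae_notMem] at h3
    refine ⟨fun ω => g (a, subvec V R ω), ?_, ?_⟩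
    · refine Measurable.stronglyMeasurable (hgm.comp (Measurable.prodMk measurable_const ?_))
      exact comap_measurable _
    · filter_upwards [hhp, h3] with ω h4 h5
      refine h4.trans ?_
      by_contra hne
      exact h5 ⟨mem_univ _, hne⟩
  have hall : gen A ⊔ sig V univ ≤ mΩ := sup_le hmAle (sig_le hV _)
  have hYaA : CondIndepGiven μ Ya A (subvec V R) := by
    rw [condIndepGiven_iff hYa hA (hsub R)]
    intro s hs
    exact (hred s hs).congr (condExp_eq_of_aesm le_sup_right
      (sup_le_sup_left (sig_mono V (subset_univ R)) _) hall (hred s hs)).symm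
  have hAYa : CondIndepGiven μ A Ya (subvec V R) := ⟨hYaA.1, hYaA.2.symm⟩
  have h1 := (condIndepGiven_iff hA hYa (hsub R)).1 hAYa t ht
  have hYR : gen Ya ⊔ sig V R ≤ mΩ := sup_le hmYle (sig_le hV _)
  -- `P(A ∈ t | Ya, V_R) = P(A ∈ t | V_R)`, which is a function of `V_C`.
  have h2 := (hC t ht).congr (condExp_eq_of_aesm le_rfl le_sup_right hYR h1)
  exact h2.congr (condExp_eq_of_aesm le_sup_right
    (sup_le_sup_left (sig_mono V hCR) _) hYR h2).symm

end Family

/-- YA-sequential selection: `C_YA = R_A(V_{R_{Y|A}(V)})` controls for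
confounding. -/
theorem YA_sequential_control
    {Ω I : Type*} [MeasurableSpace Ω] [StandardBorelSpace Ω] [Fintype I]
    (μ : Measure Ω) [IsProbabilityMeasure μ]
    (A Y Y0 Y1 : Ω → ℝ) (V : I → Ω → ℝ)
    (hA : Measurable A) (hY : Measurable Y) (hY0 : Measurable Y0) (hY1 : Measurable Y1)
    (hV : ∀ i, Measurable (V i))
    (hbin : IsBinary A)
    (hcons : Consistency μ A Y Y0 Y1)
    (hS : ControlsConfounding μ A Y0 Y1 (subvec V Set.univ))
    (hpos : PositivePairDensity μ A V) :
    ControlsConfounding μ A Y0 Y1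
      (subvec V (treatBoundary μ A V (outBoundary μ A Y V Set.univ))) := by
  have hE := EquivProd.of_pos hA hV hpos
  exact ⟨control_one hA hY hY0 hV hE 0 1 hbin hcons.2 hS.1,
    control_one hA hY hY1 hV hE 1 0 (fun ω => (hbin ω).symm) hcons.1 hS.2⟩
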